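/- Let $p$ be an odd prime and let $\mathcal{O}_p \subset M_2(\mathbb{Q}_p)$ be the order of the previous context (with $r, s \geq 1$). Then the reduced norm of the unit group satisfies $\det(\mathcal{O}_p^\times) = \mathbb{Z}_p^{\times 2}$. -/

import Mathlib

open Matrix

/-- Hensel's lemma for squares: for odd `p`, a `p`-adic integer congruent modulo `p` to the square
of a unit is the square of a unit. -/
theorem PadicInt.exists_unit_sq_eq_of_dvd_sub (p : ℕ) [Fact p.Prime] (hp : p ≠ 2)
    {a D : ℤ_[p]} (ha : IsUnit a) (h : (p : ℤ_[p]) ∣ a ^ 2 - D) :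
    ∃ u : ℤ_[p]ˣ, D = (u : ℤ_[p]) ^ 2 := by
  have h2 : ‖(2 : ℤ_[p])‖ = 1 := by
    have := (PadicInt.norm_natCast_eq_one_iff (p := p) (n := 2)).2
      ((Nat.coprime_primes Fact.out Nat.prime_two).2 hp)
    exact_mod_cast this
  have ha1 : ‖a‖ = 1 := PadicInt.isUnit_iff.1 ha
  have hlt : ‖a ^ 2 - D‖ < 1 := by
    rwa [PadicInt.norm_lt_one_iff_dvd]
  obtain ⟨z, hz, hza, -, -⟩ := hensels_lemma (p := p) (R := ℤ_[p])
    (F := (Polynomial.X ^ 2 - Polynomial.C D)) (a := a)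
    (by simpa [h2, ha1, one_add_one_eq_two] using hlt)
  have hzD : D = z ^ 2 := by
    have : z ^ 2 - D = 0 := by simpa using hz
    exact (sub_eq_zero.1 this).symm
  have hz1 : IsUnit z := by
    rw [PadicInt.isUnit_iff]
    have h1 : ‖z - a‖ < ‖a‖ := by simpa [h2, ha1, one_add_one_eq_two] using hza
    have := IsUltrametricDist.norm_add_eq_max_of_norm_ne_norm h1.ne
    rw [sub_add_cancel, max_eq_right h1.le] at this
    rw [this, ha1]
  exact ⟨hz1.unit, by simpa using hzD⟩

/-- The determinant of an element of the order is a `p`-adic integer congruent to a square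
modulo `p`. -/
theorem exists_det_eq_of_mem_span_order (p : ℕ) [Fact p.Prime] {r s : ℕ} (hr : 1 ≤ r)
    {y : Matrix (Fin 2) (Fin 2) ℚ_[p]}
    (hy : y ∈ Submodule.span ℤ_[p]
        ({(1 : Matrix (Fin 2) (Fin 2) ℚ_[p]), !![0, 1; (p : ℚ_[p]), 0],
          !![(p : ℚ_[p]) ^ r, 0; 0, 0], !![0, (p : ℚ_[p]) ^ s; 0, 0]} :
            Set (Matrix (Fin 2) (Fin 2) ℚ_[p]))) :
    ∃ a D : ℤ_[p], y.det = (D : ℚ_[p]) ∧ (p : ℤ_[p]) ∣ a ^ 2 - D := by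
  simp only [Submodule.mem_span_insert, Submodule.mem_span_singleton] at hy
  obtain ⟨a, _, ⟨b, _, ⟨c, _, ⟨d, rfl⟩, rfl⟩, rfl⟩, rfl⟩ := hy
  obtain ⟨k, rfl⟩ := Nat.exists_eq_add_of_le' hr
  refine ⟨a, a ^ 2 + a * c * p ^ (k + 1) - p * b * (b + d * p ^ s), ?_,
    b * (b + d * p ^ s) - a * c * p ^ k, by ring⟩
  have hsmul (x : ℤ_[p]) (q : ℚ_[p]) : x • q = x * q := rfl
  simp [Matrix.det_fin_two, hsmul]
  ring

/-- Let `p` be an odd prime, `r ≥ s ≥ 1`, and `𝒪_p ⊂ M₂(ℚ_p)` the `ℤ_p`-span of `1`,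
`!![0,1;p,0]`, `!![p^r,0;0,0]`, `!![0,p^s;0,0]`. Then the reduced norm (determinant) of
the unit group of `𝒪_p` is exactly the group `ℤ_p^{×2}` of squares of units: every unit
of `𝒪_p` has determinant a square of a unit of `ℤ_p`, and every square of a unit of
`ℤ_p` arises as the determinant of a unit of `𝒪_p`. -/
theorem det_unit_group_eq_squares
    (p : ℕ) [Fact p.Prime] (hp : p ≠ 2) (r s : ℕ) (hs : 1 ≤ s) (hrs : s ≤ r) :
    (∀ y ∈ Submodule.span ℤ_[p]
        ({(1 : Matrix (Fin 2) (Fin 2) ℚ_[p]), !![0, 1; (p : ℚ_[p]), 0],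
          !![(p : ℚ_[p]) ^ r, 0; 0, 0], !![0, (p : ℚ_[p]) ^ s; 0, 0]} :
            Set (Matrix (Fin 2) (Fin 2) ℚ_[p])),
      (∃ z ∈ Submodule.span ℤ_[p]
        ({(1 : Matrix (Fin 2) (Fin 2) ℚ_[p]), !![0, 1; (p : ℚ_[p]), 0],
          !![(p : ℚ_[p]) ^ r, 0; 0, 0], !![0, (p : ℚ_[p]) ^ s; 0, 0]} :
            Set (Matrix (Fin 2) (Fin 2) ℚ_[p])), y * z = 1 ∧ z * y = 1) →
        ∃ u : ℤ_[p]ˣ, y.det = (((u : ℤ_[p]) : ℚ_[p])) ^ 2) ∧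
    (∀ u : ℤ_[p]ˣ, ∃ y ∈ Submodule.span ℤ_[p]
        ({(1 : Matrix (Fin 2) (Fin 2) ℚ_[p]), !![0, 1; (p : ℚ_[p]), 0],
          !![(p : ℚ_[p]) ^ r, 0; 0, 0], !![0, (p : ℚ_[p]) ^ s; 0, 0]} :
            Set (Matrix (Fin 2) (Fin 2) ℚ_[p])),
      (∃ z ∈ Submodule.span ℤ_[p]
        ({(1 : Matrix (Fin 2) (Fin 2) ℚ_[p]), !![0, 1; (p : ℚ_[p]), 0],
          !![(p : ℚ_[p]) ^ r, 0; 0, 0], !![0, (p : ℚ_[p]) ^ s; 0, 0]} :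
            Set (Matrix (Fin 2) (Fin 2) ℚ_[p])), y * z = 1 ∧ z * y = 1) ∧
        y.det = (((u : ℤ_[p]) : ℚ_[p])) ^ 2) := by
  refine ⟨fun y hy ⟨z, hz, hyz, _⟩ => ?_, fun u => ?_⟩
  · obtain ⟨a, D, hD, hdvd⟩ := exists_det_eq_of_mem_span_order p (hs.trans hrs) hy
    obtain ⟨_, E, hE, _⟩ := exists_det_eq_of_mem_span_order p (hs.trans hrs) hz
    have hDE : D * E = 1 := by
      have := congrArg Matrix.det hyz
      rw [Matrix.det_mul, Matrix.det_one, hD, hE] at this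
      exact PadicInt.ext (by simpa using this)
    have ha : IsUnit a := by
      by_contra hna
      have hpa : (p : ℤ_[p]) ∣ a := by
        rwa [← PadicInt.norm_lt_one_iff_dvd, ← PadicInt.mem_nonunits]
      have hpD : (p : ℤ_[p]) ∣ D := (dvd_sub_right (dvd_pow hpa two_ne_zero)).1 hdvd
      exact PadicInt.p_nonunit (isUnit_of_dvd_one (hDE ▸ hpD.mul_right E))
    obtain ⟨u, hu⟩ := PadicInt.exists_unit_sq_eq_of_dvd_sub p hp ha hdvd
    exact ⟨u, by rw [hD, hu]; push_cast; rfl⟩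
  · refine ⟨(u : ℤ_[p]) • 1, Submodule.smul_mem _ _ (Submodule.subset_span (by simp)),
      ⟨((u⁻¹ : ℤ_[p]ˣ) : ℤ_[p]) • 1, Submodule.smul_mem _ _ (Submodule.subset_span (by simp)),
        ?_, ?_⟩, ?_⟩
    · rw [smul_mul_smul_comm, Units.mul_inv, one_smul, mul_one]
    · rw [smul_mul_smul_comm, Units.inv_mul, one_smul, mul_one]
    · have hsmul (x : ℤ_[p]) (q : ℚ_[p]) : x • q = x * q := rfl
      simp [hsmul, sq]
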